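/- arXiv:1503.05704 — 2 statements merged into one kernel-verified Lean document; each statement's English description precedes it below -/
import Mathlib

section
/- Let q ≥ 2 be an even integer and n ≥ 1. Let w ∈ (Fin ((q-1)*n) → ZMod q) be the concatenation of the blocks (j, j, …, j) of length n for j = 1, 2, …, q-1, and let C = { a • w : a ∈ ZMod q }. Then C has exactly q elements and the minimum Hamming weight of the nonzero words of C equals (q/2)·n. -/
/-- The Hamming weight of a word: the number of nonzero coordinates. -/
noncomputable def hwt {q : ℕ} {I : Type*} (x : I → ZMod q) : ℕ :=
  Set.ncard {i | x i ≠ 0}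

/-- `wrep q n` is the concatenation of the blocks `(j, j, …, j)` of length `n` for
`j = 1, 2, …, q-1`, a word of length `(q-1)·n` over `ZMod q`. -/
def wrep (q n : ℕ) : Fin ((q - 1) * n) → ZMod q := fun i =>
  (((i : ℕ) / n + 1 : ℕ) : ZMod q)

/-!
The word `wrep q n` takes every nonzero value of `ZMod q` exactly `n` times, so `a • wrep q n` has
weight `n` times the number of `x` with `a * x ≠ 0`. The annihilator of `a` has `gcd(q, a)`
elements. For `a ≠ 0` this is a proper divisor of `q`, the largest possible one being `q / p` with
`p` the least prime factor of `q`; it is attained at `a = q / p`.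
-/

theorem le_div_minFac_of_dvd_of_lt {d q : ℕ} (hdvd : d ∣ q) (hlt : d < q) : d ≤ q / q.minFac := by
  have one_lt_quotient : 1 < q / d :=
    Nat.one_lt_div_of_mem_properDivisors (Nat.mem_properDivisors.2 ⟨hdvd, hlt⟩)
  rw [Nat.le_div_iff_mul_le q.minFac_pos]
  calc d * q.minFac ≤ d * (q / d) :=
        Nat.mul_le_mul_left d (Nat.minFac_le_of_dvd one_lt_quotient (Nat.div_dvd_of_dvd hdvd))
    _ = q := Nat.mul_div_cancel' hdvd

theorem sub_div_minFac_of_even {q : ℕ} (hq : Even q) : q - q / q.minFac = q / 2 := by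
  rw [(Nat.minFac_eq_two_iff q).2 hq.two_dvd]
  have := Nat.div_two_mul_two_of_even hq
  lia

theorem val_natCast_div_minFac {q : ℕ} (hq : 2 ≤ q) :
    ((q / q.minFac : ℕ) : ZMod q).val = q / q.minFac :=
  ZMod.val_natCast_of_lt <| Nat.div_lt_self (by lia) (Nat.minFac_prime (by lia)).one_lt

theorem natCast_div_minFac_ne_zero {q : ℕ} (hq : 2 ≤ q) : ((q / q.minFac : ℕ) : ZMod q) ≠ 0 := by
  have hpos : 0 < q / q.minFac := Nat.div_pos (Nat.minFac_le (by lia)) q.minFac_pos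
  intro h
  simpa [h, hpos.ne] using val_natCast_div_minFac hq

section ZModAnnihilator

variable {q : ℕ} [NeZero q]

theorem ncard_setOf_mul_eq_zero (a : ZMod q) : {x : ZMod q | a * x = 0}.ncard = q.gcd a.val := by
  have h := IsAddCyclic.card_nsmulAddMonoidHom_ker (G := ZMod q) a.val
  rw [Nat.card_zmod] at h
  rw [← h, ← Nat.card_coe_set_eq]
  congr! 3 with x
  simp [nsmul_eq_mul]

theorem ncard_setOf_mul_ne_zero (a : ZMod q) :
    {x : ZMod q | a * x ≠ 0}.ncard = q - q.gcd a.val := by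
  have h := Set.ncard_compl {x : ZMod q | a * x = 0}
  rwa [Nat.card_zmod, ncard_setOf_mul_eq_zero] at h

theorem gcd_val_le_div_minFac {a : ZMod q} (ha : a ≠ 0) : q.gcd a.val ≤ q / q.minFac :=
  le_div_minFac_of_dvd_of_lt (Nat.gcd_dvd_left _ _) <|
    (Nat.gcd_le_right _ (ZMod.val_pos.2 ha)).trans_lt a.val_lt

end ZModAnnihilator

section ConstantBlocks

/-- The value of `wrep q n` on its `j`-th block, the blocks being indexed from `0`. -/
def blockValue (q : ℕ) (j : Fin (q - 1)) : ZMod q := ((j + 1 : ℕ) : ZMod q)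

theorem val_blockValue {q : ℕ} (j : Fin (q - 1)) : (blockValue q j).val = j + 1 :=
  ZMod.val_natCast_of_lt (by lia)

theorem blockValue_injective (q : ℕ) : Function.Injective (blockValue q) := by
  intro j k h
  have := congrArg ZMod.val h
  rw [val_blockValue, val_blockValue] at this
  lia

theorem range_blockValue (q : ℕ) [NeZero q] : Set.range (blockValue q) = {0}ᶜ := by
  ext x
  simp only [Set.mem_range, Set.mem_compl_iff, Set.mem_singleton_iff]
  constructor
  · rintro ⟨j, rfl⟩ h
    simpa [h] using val_blockValue j
  · intro hx
    have hpos : 0 < x.val := ZMod.val_pos.2 hx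
    have hlt : x.val < q := x.val_lt
    refine ⟨⟨x.val - 1, by lia⟩, ZMod.val_injective q ?_⟩
    rw [val_blockValue]
    exact Nat.sub_add_cancel hpos

theorem wrep_finProdFinEquiv {q n : ℕ} (p : Fin (q - 1) × Fin n) :
    wrep q n (finProdFinEquiv p) = blockValue q p.1 := by
  have hn : 0 < n := p.2.pos
  simp [wrep, blockValue, Nat.add_mul_div_left _ _ hn, Nat.div_eq_of_lt p.2.isLt]

theorem ncard_preimage_wrep {q : ℕ} [NeZero q] (n : ℕ) {s : Set (ZMod q)} (hs : 0 ∉ s) :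
    (wrep q n ⁻¹' s).ncard = s.ncard * n := by
  have blocks : finProdFinEquiv ⁻¹' (wrep q n ⁻¹' s) = (blockValue q ⁻¹' s) ×ˢ Set.univ := by
    ext p
    simp [wrep_finProdFinEquiv]
  have subset_range : s ⊆ Set.range (blockValue q) := by
    rwa [range_blockValue, Set.subset_compl_singleton_iff]
  rw [← Set.ncard_preimage_of_injective_subset_range finProdFinEquiv.injective (by simp), blocks,
    Set.ncard_prod, Set.ncard_univ, Nat.card_fin,
    Set.ncard_preimage_of_injective_subset_range (blockValue_injective q) subset_range]

end ConstantBlocks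

section Code

variable {q n : ℕ}

theorem hwt_smul_wrep [NeZero q] (n : ℕ) (a : ZMod q) :
    hwt (a • wrep q n) = (q - q.gcd a.val) * n := by
  rw [← ncard_setOf_mul_ne_zero, ← ncard_preimage_wrep n (by simp)]
  rfl

theorem smul_wrep_injective (hq : 2 ≤ q) (hn : 1 ≤ n) :
    Function.Injective fun a : ZMod q => a • wrep q n := by
  intro a b h
  have at_zero := congrFun h ⟨0, Nat.mul_pos (by lia) hn⟩
  simpa [wrep] using at_zero

theorem ncard_wrep_code (hq : 2 ≤ q) (hn : 1 ≤ n) :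
    {w : Fin ((q - 1) * n) → ZMod q | ∃ a : ZMod q, w = a • wrep q n}.ncard = q := by
  simpa [Set.range, eq_comm] using Set.ncard_range_of_injective (smul_wrep_injective hq hn)

theorem le_hwt_smul_wrep [NeZero q] (n : ℕ) {a : ZMod q} (ha : a ≠ 0) :
    (q - q / q.minFac) * n ≤ hwt (a • wrep q n) := by
  rw [hwt_smul_wrep]
  gcongr
  exact gcd_val_le_div_minFac ha

theorem hwt_div_minFac_smul_wrep (hq : 2 ≤ q) (n : ℕ) :
    hwt (((q / q.minFac : ℕ) : ZMod q) • wrep q n) = (q - q / q.minFac) * n := by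
  have : NeZero q := ⟨by lia⟩
  rw [hwt_smul_wrep, val_natCast_div_minFac hq,
    Nat.gcd_eq_right (Nat.div_dvd_of_dvd q.minFac_dvd)]

end Code

theorem card_and_min_weight_wrep_code_general (q n : ℕ) (hq : 2 ≤ q) (hn : 1 ≤ n) :
    Set.ncard {w : Fin ((q - 1) * n) → ZMod q | ∃ a : ZMod q, w = a • wrep q n} = q ∧
      IsLeast {t | ∃ w ∈ {w : Fin ((q - 1) * n) → ZMod q | ∃ a : ZMod q, w = a • wrep q n},
          w ≠ (0 : Fin ((q - 1) * n) → ZMod q) ∧ t = hwt w} ((q - q / q.minFac) * n) := by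
  have : NeZero q := ⟨by lia⟩
  refine ⟨ncard_wrep_code hq hn, ⟨_, ⟨_, rfl⟩, ?_, (hwt_div_minFac_smul_wrep hq n).symm⟩, ?_⟩
  · intro h
    exact natCast_div_minFac_ne_zero hq (smul_wrep_injective hq hn (h.trans (zero_smul _ _).symm))
  · rintro _ ⟨_, ⟨a, rfl⟩, hw, rfl⟩
    exact le_hwt_smul_wrep n fun ha => hw (by rw [ha, zero_smul])

/-- For even `q`, the code generated by the word `(1,…,1, 2,…,2, …, q-1,…,q-1)` (each block
of length `n`) has `q` codewords and minimum nonzero Hamming weight `(q/2)·n`. -/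
theorem card_and_min_weight_wrep_code (q n : ℕ) (hq : 2 ≤ q) (hqe : Even q) (hn : 1 ≤ n) :
    Set.ncard {w : Fin ((q - 1) * n) → ZMod q | ∃ a : ZMod q, w = a • wrep q n} = q ∧
      sInf {t | ∃ w ∈ {w : Fin ((q - 1) * n) → ZMod q | ∃ a : ZMod q, w = a • wrep q n},
          w ≠ (0 : Fin ((q - 1) * n) → ZMod q) ∧ t = hwt w} = (q / 2) * n := by
  rw [← sub_div_minFac_of_even hqe]
  exact (card_and_min_weight_wrep_code_general q n hq hn).imp_right IsLeast.csInf_eq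
end

section
/- Let q ≥ 1 and let G0 be a k0 × n0 matrix, G1 a k1 × n1 matrix, and A a k0 × n1 matrix, all over ZMod q. Let C0 = { x ᵥ* G0 : x ∈ Fin k0 → ZMod q } ⊆ (Fin n0 → ZMod q), C1 = { y ᵥ* G1 : y ∈ Fin k1 → ZMod q } ⊆ (Fin n1 → ZMod q), and let C ⊆ (Fin (n0+n1) → ZMod q) be the code generated by the block matrix [[0, G1],[G0, A]], that is, C = { Fin.append (x ᵥ* G0) (y ᵥ* G1 + x ᵥ* A) : x ∈ Fin k0 → ZMod q, y ∈ Fin k1 → ZMod q }. Then R(C) ≤ R(C0) + R(C1). -/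
open Matrix

/-- The Hamming distance between two words: the number of coordinates where they differ. -/
noncomputable def hdist {q : ℕ} {I : Type*} (x y : I → ZMod q) : ℕ :=
  Set.ncard {i | x i ≠ y i}

/-- The covering radius of a code `C`: the maximum over all words `u` of the minimum Hamming
distance from `u` to a codeword of `C`. -/
noncomputable def covRad {q : ℕ} {I : Type*} (C : Set (I → ZMod q)) : ℕ :=
  sSup {r | ∃ u : I → ZMod q, r = sInf {e | ∃ c ∈ C, e = hdist u c}}

/-
Split a word as `(u₀, u₁)` and choose `x` with `x ᵥ* G₀` within `R(C₀)` of `u₀`. This fixes the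
shift `x ᵥ* A` of the second half. Translation preserves Hamming distance, so a codeword of `C₁`
within `R(C₁)` of `u₁ - x ᵥ* A` yields one within `R(C₁)` of `u₁` after the shift, and the distances
of the two halves add up.
-/

section HammingDistance

variable {q : ℕ}

theorem hdist_eq_hammingDist {I : Type*} [Fintype I] (u v : I → ZMod q) :
    hdist u v = hammingDist u v := by
  simp [hdist, hammingDist, Set.ncard_eq_toFinset_card']

theorem hdist_le_card {I : Type*} [Finite I] (u v : I → ZMod q) : hdist u v ≤ Nat.card I :=
  Set.ncard_le_card _

theorem hdist_sub_eq_hdist_add {I : Type*} (u t c : I → ZMod q) :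
    hdist (u - t) c = hdist u (c + t) := by
  simp only [hdist, Pi.sub_apply, Pi.add_apply, ne_eq, sub_eq_iff_eq_add]

theorem hdist_append {m n : ℕ} (u₀ c₀ : Fin m → ZMod q) (u₁ c₁ : Fin n → ZMod q) :
    hdist (Fin.append u₀ u₁) (Fin.append c₀ c₁) = hdist u₀ c₀ + hdist u₁ c₁ := by
  simp only [hdist_eq_hammingDist, hammingDist, Finset.card_filter, Fin.sum_univ_add,
    Fin.append_left, Fin.append_right]

end HammingDistance

section CoveringRadius

variable {q : ℕ} {I : Type*} {C : Set (I → ZMod q)}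

theorem sInf_hdist_le {c : I → ZMod q} (hc : c ∈ C) (u : I → ZMod q) :
    sInf {e | ∃ c ∈ C, e = hdist u c} ≤ hdist u c :=
  csInf_le' ⟨c, hc, rfl⟩

theorem sInf_hdist_le_iff (hC : C.Nonempty) {u : I → ZMod q} {r : ℕ} :
    sInf {e | ∃ c ∈ C, e = hdist u c} ≤ r ↔ ∃ c ∈ C, hdist u c ≤ r := by
  refine ⟨fun h => ?_, fun ⟨c, hc, h⟩ => (sInf_hdist_le hc u).trans h⟩
  have hne : {e | ∃ c ∈ C, e = hdist u c}.Nonempty := hC.imp' (hdist u) fun c hc => ⟨c, hc, rfl⟩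
  obtain ⟨c, hc, hmin⟩ := Nat.sInf_mem hne
  exact ⟨c, hc, hmin ▸ h⟩

theorem covRad_le_iff [Finite I] (hC : C.Nonempty) {r : ℕ} :
    covRad C ≤ r ↔ ∀ u, ∃ c ∈ C, hdist u c ≤ r := by
  have hbdd : BddAbove {r | ∃ u : I → ZMod q, r = sInf {e | ∃ c ∈ C, e = hdist u c}} := by
    obtain ⟨c, hc⟩ := hC
    refine ⟨Nat.card I, ?_⟩
    rintro _ ⟨u, rfl⟩
    exact (sInf_hdist_le hc u).trans (hdist_le_card u c)
  have hne : {r | ∃ u : I → ZMod q, r = sInf {e | ∃ c ∈ C, e = hdist u c}}.Nonempty :=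
    ⟨_, 0, rfl⟩
  rw [covRad, csSup_le_iff hbdd hne]
  simp only [Set.mem_ofPred_eq, forall_exists_index, forall_eq_apply_imp_iff, sInf_hdist_le_iff hC]

theorem exists_hdist_le_covRad [Finite I] (hC : C.Nonempty) (u : I → ZMod q) :
    ∃ c ∈ C, hdist u c ≤ covRad C :=
  (covRad_le_iff hC).mp le_rfl u

end CoveringRadius

theorem covRad_block_le_general {q n₀ n₁ : ℕ} {X Y : Type*} [Nonempty X] [Nonempty Y]
    (f₀ : X → Fin n₀ → ZMod q) (f₁ : Y → Fin n₁ → ZMod q) (t : X → Fin n₁ → ZMod q) :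
    covRad {w | ∃ x y, w = Fin.append (f₀ x) (f₁ y + t x)} ≤
      covRad {w | ∃ x, w = f₀ x} + covRad {w | ∃ y, w = f₁ y} := by
  inhabit X
  inhabit Y
  have hC₀ : {w | ∃ x, w = f₀ x}.Nonempty := ⟨f₀ default, default, rfl⟩
  have hC₁ : {w | ∃ y, w = f₁ y}.Nonempty := ⟨f₁ default, default, rfl⟩
  have hC : {w | ∃ x y, w = Fin.append (f₀ x) (f₁ y + t x)}.Nonempty :=
    ⟨_, default, default, rfl⟩
  refine (covRad_le_iff hC).mpr fun u => ?_
  obtain ⟨⟨u₀, u₁⟩, rfl⟩ := (Fin.appendEquiv n₀ n₁).surjective u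
  obtain ⟨_, ⟨x, rfl⟩, hx⟩ := exists_hdist_le_covRad hC₀ u₀
  obtain ⟨_, ⟨y, rfl⟩, hy⟩ := exists_hdist_le_covRad hC₁ (u₁ - t x)
  refine ⟨_, ⟨x, y, rfl⟩, ?_⟩
  calc hdist (Fin.append u₀ u₁) (Fin.append (f₀ x) (f₁ y + t x))
      = hdist u₀ (f₀ x) + hdist (u₁ - t x) (f₁ y) := by rw [hdist_append, hdist_sub_eq_hdist_add]
    _ ≤ _ := add_le_add hx hy

/-- If `C₀`, `C₁` are the codes generated by matrices `G₀`, `G₁` and `C` is the code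
generated by the block matrix `[[0, G₁], [G₀, A]]`, then `R(C) ≤ R(C₀) + R(C₁)`. -/
theorem covRad_block_le (q k0 k1 n0 n1 : ℕ) (hq : 1 ≤ q)
    (G0 : Matrix (Fin k0) (Fin n0) (ZMod q)) (G1 : Matrix (Fin k1) (Fin n1) (ZMod q))
    (A : Matrix (Fin k0) (Fin n1) (ZMod q)) :
    covRad {w : Fin (n0 + n1) → ZMod q |
        ∃ x : Fin k0 → ZMod q, ∃ y : Fin k1 → ZMod q,
          w = Fin.append (x ᵥ* G0) (y ᵥ* G1 + x ᵥ* A)} ≤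
      covRad {w : Fin n0 → ZMod q | ∃ x : Fin k0 → ZMod q, w = x ᵥ* G0} +
        covRad {w : Fin n1 → ZMod q | ∃ y : Fin k1 → ZMod q, w = y ᵥ* G1} :=
  covRad_block_le_general (· ᵥ* G0) (· ᵥ* G1) (· ᵥ* A)
end
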